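/- Suppose ℙ is an atomless probability measure on a Polish space Ω, X ∈ S_D(Ω) is such that the law μ of X has support contained in a compact subset of D, and the lift U is Fréchet differentiable at X (within S_D(Ω)). Then for every atomless probability measure ℙ̄ on a Polish space Ω̄ and every X̄ ∈ L²(Ω̄; ℝ^d) with X̄ ∈ D almost surely and with law equal to μ, the lift Ū : S_D(Ω̄) → ℝ, Ū(Y) := u(law of Y), is Fréchet differentiable at X̄ (within S_D(Ω̄)). -/

import Mathlib

open MeasureTheory

/-- A measure is atomless (in the general measure-theoretic sense) if there exists no
measurable set `E` of positive measure such that every measurable subset `G ⊆ E` with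
`μ G < μ E` satisfies `μ G = 0`. -/
def IsAtomlessMeasure {Ω : Type*} [MeasurableSpace Ω] (μ : Measure Ω) : Prop :=
  ¬ ∃ E : Set Ω, MeasurableSet E ∧ 0 < μ E ∧
      ∀ G : Set Ω, MeasurableSet G → G ⊆ E → μ G < μ E → μ G = 0

/-- The set `S_D(Ω)` of square integrable random variables taking values in `D`
almost surely. -/
def SD {Ω : Type*} [MeasurableSpace Ω] {d : ℕ} (D : Set (EuclideanSpace ℝ (Fin d)))
    (ℙ : Measure Ω) : Set (Lp (EuclideanSpace ℝ (Fin d)) 2 ℙ) :=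
  {Y | ∀ᵐ ω ∂ℙ, Y ω ∈ D}

/-- The lift `U(Y) := u(law of Y)` of a function `u` of measures. -/
noncomputable def lift {Ω : Type*} [MeasurableSpace Ω] {d : ℕ}
    (u : Measure (EuclideanSpace ℝ (Fin d)) → ℝ) (ℙ : Measure Ω) :
    Lp (EuclideanSpace ℝ (Fin d)) 2 ℙ → ℝ :=
  fun Y => u (ℙ.map Y)

open Filter Topology Set

lemma aux_cdf_map (ν : Measure ℝ) [IsProbabilityMeasure ν] (h0 : ∀ x, ν {x} = 0) :
    ∃ F : ℝ → unitInterval, Measurable F ∧ ν.map F = volume := by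
  have hc : Continuous (ProbabilityTheory.cdf ν) := by
    rw [continuous_iff_continuousAt]
    intro x
    rw [(ProbabilityTheory.cdf ν).mono.continuousAt_iff_leftLim_eq_rightLim,
      StieltjesFunction.rightLim_eq]
    have h1 := StieltjesFunction.measure_singleton (ProbabilityTheory.cdf ν) x
    rw [ProbabilityTheory.measure_cdf, h0] at h1
    have h2 := ENNReal.ofReal_eq_zero.1 h1.symm
    have h3 := (ProbabilityTheory.cdf ν).mono.leftLim_le (le_refl x)
    linarith
  let F : ℝ → unitInterval := fun x =>
    ⟨ProbabilityTheory.cdf ν x, ProbabilityTheory.cdf_nonneg ν x, ProbabilityTheory.cdf_le_one ν x⟩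
  have hFm : Measurable F := (hc.measurable).subtype_mk
  refine ⟨F, hFm, ?_⟩
  have : IsProbabilityMeasure (ν.map F) := Measure.isProbabilityMeasure_map hFm.aemeasurable
  refine Measure.ext_of_Iic _ _ fun t => ?_
  rw [Measure.map_apply hFm measurableSet_Iic, unitInterval.volume_Iic]
  set S : Set ℝ := F ⁻¹' Iic t with hS
  have hSm : ∀ x, x ∈ S ↔ ProbabilityTheory.cdf ν x ≤ t := fun x => Iff.rfl
  rcases eq_or_lt_of_le t.2.2 with ht1 | ht1
  · have : S = univ := by
      ext x
      simp only [hSm, mem_univ, iff_true, ht1]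
      exact ProbabilityTheory.cdf_le_one ν x
    rw [this, ht1]; simp
  · obtain ⟨b, hb⟩ := ((ProbabilityTheory.tendsto_cdf_atTop ν).eventually (eventually_gt_nhds ht1)).exists
    rcases S.eq_empty_or_nonempty with hE | ⟨a, ha⟩
    · have ht0 : (t : ℝ) = 0 := by
        by_contra hne
        have hpos : (0 : ℝ) < t := lt_of_le_of_ne t.2.1 (Ne.symm hne)
        obtain ⟨a, ha⟩ :=
          ((ProbabilityTheory.tendsto_cdf_atBot ν).eventually_lt_const hpos).exists
        have : a ∈ S := (hSm a).2 ha.le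
        rw [hE] at this
        exact this
      rw [hE, ht0]; simp
    · have hbdd : BddAbove S := by
        refine ⟨b, fun x hx => ?_⟩
        by_contra hlt
        have := (ProbabilityTheory.monotone_cdf ν) (not_le.1 hlt).le
        have := (hSm x).1 hx
        linarith
      have hcl : IsClosed S := by
        have : S = {x | ProbabilityTheory.cdf ν x ≤ t} := rfl
        rw [this]; exact isClosed_le hc continuous_const
      have hmem := hcl.csSup_mem ⟨a, ha⟩ hbdd
      obtain ⟨s, hs⟩ := mem_range_of_exists_le_of_exists_ge hc ⟨a, (hSm a).1 ha⟩ ⟨b, hb.le⟩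
      have hsS : s ∈ S := (hSm s).2 hs.le
      have hle := (ProbabilityTheory.monotone_cdf ν) (le_csSup hbdd hsS)
      have hval : ProbabilityTheory.cdf ν (sSup S) = t :=
        le_antisymm ((hSm _).1 hmem) (hs ▸ hle)
      have hSI : S = Iic (sSup S) := by
        ext x
        refine ⟨fun hx => le_csSup hbdd hx, fun hx => (hSm x).2 ?_⟩
        exact ((ProbabilityTheory.monotone_cdf ν) hx).trans hval.le
      rw [hSI, ← ProbabilityTheory.ofReal_cdf, hval]

lemma aux_prob {Ω Ω' : Type*} [MeasurableSpace Ω] [StandardBorelSpace Ω]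
    [MeasurableSpace Ω'] [StandardBorelSpace Ω'] [Nonempty Ω']
    (ν : Measure Ω) [IsProbabilityMeasure ν] (h0 : ∀ x, ν {x} = 0)
    (ν' : Measure Ω') [IsProbabilityMeasure ν'] :
    ∃ f : Ω → Ω', Measurable f ∧ ν.map f = ν' := by
  have he := measurableEmbedding_embeddingReal Ω
  have : IsProbabilityMeasure (ν.map (embeddingReal Ω)) :=
    Measure.isProbabilityMeasure_map he.measurable.aemeasurable
  obtain ⟨F, hF, hFm⟩ := aux_cdf_map (ν.map (embeddingReal Ω)) (fun x => by
    rw [Measure.map_apply he.measurable (measurableSet_singleton x)]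
    have : (embeddingReal Ω ⁻¹' {x}).Subsingleton := fun a ha b hb =>
      he.injective (ha.trans hb.symm)
    rcases this.eq_empty_or_singleton with h | ⟨y, h⟩
    · rw [h]; simp
    · rw [h]; exact h0 y)
  obtain ⟨g, hg, hgm⟩ := ν'.exists_measurable_map_eq
  refine ⟨g ∘ F ∘ embeddingReal Ω, hg.comp (hF.comp he.measurable), ?_⟩
  rw [← Measure.map_map hg (hF.comp he.measurable), ← Measure.map_map hF he.measurable, hFm, hgm]

lemma aux_fin {Ω Ω' : Type*} [MeasurableSpace Ω] [StandardBorelSpace Ω]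
    [MeasurableSpace Ω'] [StandardBorelSpace Ω'] [Nonempty Ω']
    (ν : Measure Ω) [IsFiniteMeasure ν] (h0 : ∀ x, ν {x} = 0)
    (ν' : Measure Ω') (h : ν univ = ν' univ) :
    ∃ f : Ω → Ω', Measurable f ∧ ν.map f = ν' := by
  by_cases hz : ν univ = 0
  · refine ⟨fun _ => Classical.arbitrary Ω', measurable_const, ?_⟩
    rw [Measure.measure_univ_eq_zero.1 hz, Measure.measure_univ_eq_zero.1 (h.symm.trans hz)]
    simp
  · have ht : ν univ ≠ ⊤ := measure_ne_top ν univ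
    have : IsProbabilityMeasure ((ν univ)⁻¹ • ν) :=
      ⟨by simp [ENNReal.inv_mul_cancel hz ht]⟩
    have : IsProbabilityMeasure ((ν univ)⁻¹ • ν') :=
      ⟨by simp [← h, ENNReal.inv_mul_cancel hz ht]⟩
    obtain ⟨f, hf, hfm⟩ := aux_prob ((ν univ)⁻¹ • ν) (fun x => by simp [h0]) ((ν univ)⁻¹ • ν')
    refine ⟨f, hf, ?_⟩
    have := congrArg (fun m => (ν univ) • m) hfm
    simpa [Measure.map_smul, smul_smul, ENNReal.mul_inv_cancel hz ht] using this

lemma aux_tau {Ω Ω' E : Type*} [MeasurableSpace Ω] [StandardBorelSpace Ω]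
    [MeasurableSpace Ω'] [StandardBorelSpace Ω'] [Nonempty Ω']
    [NormedAddCommGroup E] [SecondCountableTopology E] [MeasurableSpace E] [BorelSpace E]
    (P : Measure Ω) [IsFiniteMeasure P] (h0 : ∀ x, P {x} = 0)
    (P' : Measure Ω') (X : Ω → E) (X' : Ω' → E) (hX : Measurable X) (hX' : Measurable X')
    (hlaw : P'.map X' = P.map X) (ε : ℝ) (hε : 0 < ε) :
    ∃ f : Ω → Ω', MeasurePreserving f P P' ∧ ∀ᵐ ω ∂P, ‖X' (f ω) - X ω‖ ≤ ε := by
  classical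
  have hex : ∀ x : E, ∃ n, dist x (TopologicalSpace.denseSeq E n) < ε / 2 := fun x => by
    obtain ⟨_, hn, ⟨n, rfl⟩⟩ := Metric.dense_iff.1 (TopologicalSpace.denseRange_denseSeq E) x
      (ε / 2) (by positivity)
    exact ⟨n, by rw [dist_comm]; exact hn⟩
  let q : E → ℕ := fun x => Nat.find (hex x)
  have hq : Measurable q := measurable_find hex (fun k =>
    measurableSet_lt (measurable_id.dist measurable_const) measurable_const)
  have hqd : ∀ x y, q x = q y → ‖x - y‖ ≤ ε := fun x y hxy => by
    have h1 : dist x (TopologicalSpace.denseSeq E (q x)) < ε / 2 := Nat.find_spec (hex x)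
    have h2 : dist y (TopologicalSpace.denseSeq E (q y)) < ε / 2 := Nat.find_spec (hex y)
    rw [← hxy] at h2
    rw [← dist_eq_norm]
    have := dist_triangle_right x y (TopologicalSpace.denseSeq E (q x))
    linarith
  have hB : ∀ n, MeasurableSet (q ⁻¹' {n}) := fun n => hq (measurableSet_singleton n)
  have hmass : ∀ n, (P.restrict (X ⁻¹' (q ⁻¹' {n}))) univ
      = (P'.restrict (X' ⁻¹' (q ⁻¹' {n}))) univ := fun n => by
    simp only [Measure.restrict_apply_univ]
    rw [← Measure.map_apply hX (hB n), ← Measure.map_apply hX' (hB n), hlaw]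
  have hτ : ∀ n, ∃ f : Ω → Ω', Measurable f ∧
      (P.restrict (X ⁻¹' (q ⁻¹' {n}))).map f = P'.restrict (X' ⁻¹' (q ⁻¹' {n})) := fun n =>
    aux_fin _ (fun x => le_antisymm ((Measure.restrict_apply_le _ _).trans (h0 x).le) bot_le)
      _ (hmass n)
  choose τ hτm hτe using hτ
  let f : Ω → Ω' := fun ω => τ (q (X ω)) ω
  have hf : Measurable f := by
    have h1 : Measurable (fun p : ℕ × Ω => τ p.1 p.2) :=
      measurable_from_prod_countable_right (fun n => hτm n)
    exact h1.comp ((hq.comp hX).prodMk measurable_id)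
  have hpart : ∀ (n : ℕ) (G : Set Ω'), MeasurableSet G →
      P (X ⁻¹' (q ⁻¹' {n}) ∩ f ⁻¹' G) = P' (X' ⁻¹' (q ⁻¹' {n}) ∩ G) := fun n G hG => by
    have h1 := congrArg (fun m => m G) (hτe n)
    rw [Measure.map_apply (hτm n) hG, Measure.restrict_apply (hτm n hG),
      Measure.restrict_apply hG, inter_comm, inter_comm G] at h1
    rw [← h1]
    congr 1
    ext ω
    simp only [mem_inter_iff, mem_preimage, mem_singleton_iff, f]
    constructor
    · rintro ⟨h, h'⟩; exact ⟨h, h ▸ h'⟩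
    · rintro ⟨h, h'⟩; exact ⟨h, h.symm ▸ h'⟩
  have hmp : MeasurePreserving f P P' := by
    refine ⟨hf, Measure.ext fun G hG => ?_⟩
    rw [Measure.map_apply hf hG]
    have e1 : f ⁻¹' G = ⋃ n, (X ⁻¹' (q ⁻¹' {n}) ∩ f ⁻¹' G) := by ext; simp
    have e2 : G = ⋃ n, (X' ⁻¹' (q ⁻¹' {n}) ∩ G) := by ext; simp
    rw [e1, measure_iUnion, tsum_congr (fun n => hpart n G hG), ← measure_iUnion, ← e2]
    · intro i j hij
      refine Set.disjoint_left.2 fun ω h1 h2 => hij ?_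
      exact (h1.1 : q (X' ω) = i).symm.trans h2.1
    · exact fun n => (hX' (hB n)).inter hG
    · intro i j hij
      refine Set.disjoint_left.2 fun ω h1 h2 => hij ?_
      exact (h1.1 : q (X ω) = i).symm.trans h2.1
    · exact fun n => (hX (hB n)).inter (hf hG)
  refine ⟨f, hmp, ?_⟩
  have key : ∀ n, ∀ᵐ ω ∂P, q (X ω) = n → q (X' (f ω)) = n := fun n => by
    have h1 := hpart n (X' ⁻¹' (q ⁻¹' {n}))ᶜ (hX' (hB n)).compl
    rw [inter_compl_self, measure_empty] at h1
    rw [ae_iff]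
    refine measure_mono_null ?_ h1
    intro ω hω
    simpa using hω
  filter_upwards [ae_all_iff.2 key] with ω hω
  exact hqd _ _ (hω _ rfl)

/-- If the lift of `u` is Fréchet differentiable (within `S_D`) at some `X` on an atomless
Polish probability space whose law is supported in a compact subset of `D`, then for any
other atomless Polish probability space and any square integrable `X'` valued in `D` a.s.
with the same law, the corresponding lift is Fréchet differentiable at `X'` within `S_D`. -/
theorem lift_differentiable_independent_of_space
    {d : ℕ} (D : Set (EuclideanSpace ℝ (Fin d))) (hDopen : IsOpen D) (hDne : D.Nonempty)
    (u : Measure (EuclideanSpace ℝ (Fin d)) → ℝ)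
    {Ω : Type*} [MeasurableSpace Ω] [TopologicalSpace Ω] [PolishSpace Ω] [BorelSpace Ω]
    (ℙ : Measure Ω) [IsProbabilityMeasure ℙ] (hP : IsAtomlessMeasure ℙ)
    (X : Lp (EuclideanSpace ℝ (Fin d)) 2 ℙ) (hX : X ∈ SD D ℙ)
    (K : Set (EuclideanSpace ℝ (Fin d))) (hK : IsCompact K) (hKD : K ⊆ D)
    (hsupp : ℙ.map X Kᶜ = 0)
    (A : Lp (EuclideanSpace ℝ (Fin d)) 2 ℙ →L[ℝ] ℝ)
    (hA : HasFDerivWithinAt (lift u ℙ) A (SD D ℙ) X)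
    {Ω' : Type*} [MeasurableSpace Ω'] [TopologicalSpace Ω'] [PolishSpace Ω'] [BorelSpace Ω']
    (ℙ' : Measure Ω') [IsProbabilityMeasure ℙ'] (hP' : IsAtomlessMeasure ℙ')
    (X' : Lp (EuclideanSpace ℝ (Fin d)) 2 ℙ') (hX' : X' ∈ SD D ℙ')
    (hlaw : ℙ'.map X' = ℙ.map X) :
    ∃ A' : Lp (EuclideanSpace ℝ (Fin d)) 2 ℙ' →L[ℝ] ℝ,
      HasFDerivWithinAt (lift u ℙ') A' (SD D ℙ') X' := by

  have h0 : ∀ x, ℙ {x} = 0 := fun x => by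
    by_contra hne
    refine hP ⟨{x}, measurableSet_singleton x, pos_iff_ne_zero.2 hne, fun G _ hG hlt => ?_⟩
    rcases subset_singleton_iff_eq.1 hG with h | h
    · rw [h]; simp
    · rw [h] at hlt; exact absurd hlt (lt_irrefl _)
  have : Nonempty Ω' := nonempty_of_isProbabilityMeasure ℙ'
  have hτ := fun n : ℕ => aux_tau ℙ h0 ℙ' X X' (Lp.stronglyMeasurable X).measurable
    (Lp.stronglyMeasurable X').measurable hlaw (1 / ((n : ℝ) + 1)) Nat.one_div_pos_of_nat
  choose τ hτ hτd using hτ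
  let T : ℕ → Lp (EuclideanSpace ℝ (Fin d)) 2 ℙ' →ₗᵢ[ℝ] Lp (EuclideanSpace ℝ (Fin d)) 2 ℙ :=
    fun n => Lp.compMeasurePreservingₗᵢ ℝ (τ n) (hτ n)
  have hT : ∀ n Y, (T n Y : Ω → EuclideanSpace ℝ (Fin d)) =ᵐ[ℙ] Y ∘ τ n := fun n Y =>
    Lp.coeFn_compMeasurePreserving Y (hτ n)
  have hTX : ∀ n, ‖T n X' - X‖ ≤ 1 / ((n : ℝ) + 1) := fun n => by
    have := Lp.norm_le_of_ae_bound (p := 2) (f := T n X' - X)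
      (C := 1 / ((n : ℝ) + 1)) (by positivity) (by
        filter_upwards [Lp.coeFn_sub (T n X') X, hT n X', hτd n] with ω h1 h2 h3
        rw [h1, Pi.sub_apply, h2]
        exact h3)
    simpa [measureUnivNNReal] using this
  have hTX0 : Tendsto (fun n => T n X') atTop (𝓝 X) := by
    rw [tendsto_iff_norm_sub_tendsto_zero]
    exact squeeze_zero (fun n => norm_nonneg _) hTX tendsto_one_div_add_atTop_nhds_zero_nat
  have hTlift : ∀ n Y, lift u ℙ (T n Y) = lift u ℙ' Y := fun n Y => by
    unfold lift
    rw [Measure.map_congr (hT n Y), ← Measure.map_map (Lp.stronglyMeasurable Y).measurable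
      (hτ n).measurable, (hτ n).map_eq]
  have hTSD : ∀ n Y, Y ∈ SD D ℙ' → T n Y ∈ SD D ℙ := fun n Y hY => by
    have h1 : ∀ᵐ ω ∂ℙ, Y (τ n ω) ∈ D := (hτ n).quasiMeasurePreserving.ae hY
    show ∀ᵐ ω ∂ℙ, (T n Y) ω ∈ D
    filter_upwards [h1, hT n Y] with ω h2 h3
    rw [h3]; exact h2
  have hlX : lift u ℙ X = lift u ℙ' X' := by unfold lift; rw [hlaw]
  have hbd : ∀ n H, |A (T n H)| ≤ ‖A‖ * ‖H‖ := fun n H => by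
    have := A.le_opNorm (T n H)
    rwa [(T n).norm_map, Real.norm_eq_abs] at this
  let 𝒰 : Ultrafilter ℕ := hyperfilter ℕ
  have h𝒰 : (𝒰 : Filter ℕ) ≤ atTop := Nat.hyperfilter_le_atTop
  have hlim : ∀ H, ∃ a : ℝ, Tendsto (fun n => A (T n H)) 𝒰 (𝓝 a) := fun H => by
    obtain ⟨a, -, ha⟩ := (isCompact_Icc (a := -(‖A‖ * ‖H‖)) (b := ‖A‖ * ‖H‖)).ultrafilter_le_nhds
      (𝒰.map (fun n => A (T n H))) (by
        rw [le_principal_iff]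
        exact Filter.mem_map.2 (Filter.univ_mem' fun n => abs_le.1 (hbd n H)))
    exact ⟨a, ha⟩
  choose a ha using hlim
  let A₀ : Lp (EuclideanSpace ℝ (Fin d)) 2 ℙ' →ₗ[ℝ] ℝ :=
    { toFun := a
      map_add' := fun H G => tendsto_nhds_unique (ha (H + G)) (by
        simpa only [map_add] using (ha H).add (ha G))
      map_smul' := fun c H => tendsto_nhds_unique (ha (c • H)) (by
        simpa only [map_smul, smul_eq_mul, RingHom.id_apply] using (ha H).const_mul c) }
  let A' := A₀.mkContinuous ‖A‖ (fun H => by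
    refine le_of_tendsto (ha H).norm (Eventually.of_forall fun n => ?_)
    exact hbd n H)
  have hA' : ∀ H, A' H = a H := fun H => rfl
  refine ⟨A', ?_⟩
  rw [hasFDerivWithinAt_iff_isLittleO, Asymptotics.isLittleO_iff] at hA ⊢
  intro c hc
  have h1 := hA hc
  rw [eventually_nhdsWithin_iff, Metric.eventually_nhds_iff] at h1 ⊢
  obtain ⟨δ, hδ, h1⟩ := h1
  refine ⟨δ, hδ, fun Y hY hYD => ?_⟩
  have hdle : ∀ n, ‖T n Y - X‖ ≤ ‖Y - X'‖ + ‖T n X' - X‖ := fun n => by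
    have h2 : T n Y - X = T n (Y - X') + (T n X' - X) := by rw [map_sub]; abel
    rw [h2]
    refine (norm_add_le _ _).trans ?_
    rw [(T n).norm_map]
  have hz : Tendsto (fun n => ‖T n X' - X‖) 𝒰 (𝓝 0) :=
    (tendsto_iff_norm_sub_tendsto_zero.1 hTX0).mono_left h𝒰
  have hAz : Tendsto (fun n => A (T n X' - X)) 𝒰 (𝓝 0) := by
    have h2 : Tendsto (fun n => T n X' - X) 𝒰 (𝓝 0) := tendsto_zero_iff_norm_tendsto_zero.2 hz
    have h3 := (A.continuous.tendsto 0).comp h2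
    rw [map_zero] at h3
    exact h3
  have hsm : ∀ᶠ n in (𝒰 : Filter ℕ), ‖T n X' - X‖ < δ - ‖Y - X'‖ :=
    hz.eventually_lt_const (by rw [dist_eq_norm] at hY; linarith)
  have hev : ∀ᶠ n in (𝒰 : Filter ℕ),
      ‖lift u ℙ' Y - lift u ℙ' X' - (A (T n (Y - X')) + A (T n X' - X))‖
        ≤ c * (‖Y - X'‖ + ‖T n X' - X‖) := by
    filter_upwards [hsm] with n hn
    have h2 := h1 (y := T n Y) (by rw [dist_eq_norm]; linarith [hdle n]) (hTSD n Y hYD)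
    rw [hTlift, hlX] at h2
    have h3 : A (T n Y - X) = A (T n (Y - X')) + A (T n X' - X) := by
      rw [← map_add, map_sub (T n)]; congr 1; abel
    rw [h3] at h2
    exact h2.trans (mul_le_mul_of_nonneg_left (hdle n) hc.le)
  have hL := (tendsto_const_nhds (x := lift u ℙ' Y - lift u ℙ' X')).sub
    ((ha (Y - X')).add hAz) |>.norm
  have hR := (tendsto_const_nhds (x := ‖Y - X'‖) (f := (𝒰 : Filter ℕ))).add hz |>.const_mul c
  have := le_of_tendsto_of_tendsto hL hR hev
  simpa only [add_zero, hA'] using this
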